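/- arXiv:1706.05828 — 9 statements merged into one kernel-verified Lean document; each statement's English description precedes it below -/
import Mathlib

section
/- If the block matrix Π = [[Q, S],[Sᵀ, R]] (with Q, R symmetric) is positive semidefinite, then S R† R = S and Sᵀ Q† Q = Sᵀ, where R† and Q† are the Moore–Penrose pseudoinverses of R and Q respectively. -/
/-!
If `R x = 0`, then the vector `(0, x)` is isotropic for the quadratic form of the positive
semidefinite matrix `Π = [[Q, S], [Sᵀ, R]]`, hence lies in the kernel of `Π`, whose first block row
gives `S x = 0`. Thus `ker R ⊆ ker S` (`mulVec_eq_zero_of_fromBlocks_posSemidef`). Since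
`R R† R = R`, every `x - R† R x` lies in `ker R`, so `S x = S R† R x`. The identity for `Q` is the
same statement for `Π` with its two block indices swapped.
-/

open Matrix

theorem mulVec_eq_zero_of_fromBlocks_posSemidef {ι κ : Type*} [Fintype ι] [Fintype κ]
    {Q : Matrix ι ι ℝ} {S : Matrix ι κ ℝ} {R : Matrix κ κ ℝ}
    (h : (fromBlocks Q S Sᵀ R).PosSemidef) {x : κ → ℝ} (hx : R *ᵥ x = 0) : S *ᵥ x = 0 := by
  have key := (h.dotProduct_mulVec_zero_iff (Sum.elim 0 x)).1 (by
    simp [fromBlocks_mulVec, hx, dotProduct])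
  funext i
  simpa [fromBlocks_mulVec] using congrFun key (Sum.inl i)

/-- The off-diagonal block absorbs `G * R` for any generalized inverse `G` of `R`. -/
theorem mul_genInverse_mul_of_fromBlocks_posSemidef {ι κ : Type*} [Fintype ι] [Fintype κ]
    {Q : Matrix ι ι ℝ} {S : Matrix ι κ ℝ} {R G : Matrix κ κ ℝ}
    (h : (fromBlocks Q S Sᵀ R).PosSemidef) (hG : R * G * R = R) : S * G * R = S := by
  classical
  refine ext_of_mulVec_single fun i => ?_
  generalize (Pi.single i 1 : κ → ℝ) = x
  have hx : R *ᵥ (x - (G * R) *ᵥ x) = 0 := by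
    rw [mulVec_sub, mulVec_mulVec, ← Matrix.mul_assoc, hG, sub_self]
  have hS := mulVec_eq_zero_of_fromBlocks_posSemidef h hx
  rw [mulVec_sub, mulVec_mulVec, ← Matrix.mul_assoc, sub_eq_zero] at hS
  exact hS.symm

theorem stmt_1 (n m : ℕ) (hn : 0 < n) (hm : 0 < m)
    (Q : Matrix (Fin n) (Fin n) ℝ) (R : Matrix (Fin m) (Fin m) ℝ)
    (S : Matrix (Fin n) (Fin m) ℝ)
    (hQ : Qᵀ = Q) (hR : Rᵀ = R)
    (Rd : Matrix (Fin m) (Fin m) ℝ)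
    (hRd1 : R * Rd * R = R) (hRd2 : Rd * R * Rd = Rd)
    (hRd3 : (R * Rd)ᵀ = R * Rd) (hRd4 : (Rd * R)ᵀ = Rd * R)
    (Qd : Matrix (Fin n) (Fin n) ℝ)
    (hQd1 : Q * Qd * Q = Q) (hQd2 : Qd * Q * Qd = Qd)
    (hQd3 : (Q * Qd)ᵀ = Q * Qd) (hQd4 : (Qd * Q)ᵀ = Qd * Q)
    (hPi : (Matrix.fromBlocks Q S Sᵀ R).PosSemidef) :
    S * Rd * R = S ∧ Sᵀ * Qd * Q = Sᵀ := by
  refine ⟨mul_genInverse_mul_of_fromBlocks_posSemidef hPi hRd1,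
    mul_genInverse_mul_of_fromBlocks_posSemidef (Q := R) ?_ hQd1⟩
  have hswap := hPi.submatrix (Sum.swap : Fin m ⊕ Fin n → Fin n ⊕ Fin m)
  rwa [fromBlocks_submatrix_sum_swap_sum_swap] at hswap
end

section
/- (Popov function identity.) For every symmetric X ∈ ℝ^{n×n} and every s ∈ ℂ such that s I_n − A and −s I_n − Aᵀ are invertible, one has Bᵀ(−s I_n − Aᵀ)⁻¹ Q_X (s I_n − A)⁻¹ B + Bᵀ(−s I_n − Aᵀ)⁻¹ S_X + S_Xᵀ (s I_n − A)⁻¹ B + R = Bᵀ(−s I_n − Aᵀ)⁻¹ Q (s I_n − A)⁻¹ B + Bᵀ(−s I_n − Aᵀ)⁻¹ S + Sᵀ (s I_n − A)⁻¹ B + R; i.e. the Popov function Φ(s) can be computed with (Q_X, S_X, R) in place of (Q, S, R). -/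
/-!
The terms containing `X` cancel because of the resolvent identity
`Aᵀ X + X A = -(-s I - Aᵀ) X - X (s I - A)`: multiplying by `(-s I - Aᵀ)⁻¹` on the left and by
`(s I - A)⁻¹` on the right gives `-X (s I - A)⁻¹ - (-s I - Aᵀ)⁻¹ X`. After multiplication by `Bᵀ`
and `B` these are the negatives of the contributions of `X B` to the two cross terms; the symmetry
of `X` is what turns `(X B)ᵀ` into `Bᵀ X`.
-/

open Matrix

/-- Entrywise embedding of a real matrix into the complex matrices. -/
def cm {α β : Type*} (M : Matrix α β ℝ) : Matrix α β ℂ := M.map Complex.ofReal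

/-- The cancellation behind the Popov identity: the Lyapunov term `Aᵀ X + X A`, sandwiched between
the two resolvents, splits into two terms with one resolvent each. -/
theorem resolvent_mul_lyapunov_mul_resolvent {n : ℕ} (A X : Matrix (Fin n) (Fin n) ℂ) (s : ℂ)
    (h1 : IsUnit (s • (1 : Matrix (Fin n) (Fin n) ℂ) - A).det)
    (h2 : IsUnit ((-s) • (1 : Matrix (Fin n) (Fin n) ℂ) - Aᵀ).det) :
    ((-s) • (1 : Matrix (Fin n) (Fin n) ℂ) - Aᵀ)⁻¹ * (Aᵀ * X + X * A) *
        (s • (1 : Matrix (Fin n) (Fin n) ℂ) - A)⁻¹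
      = -(X * (s • (1 : Matrix (Fin n) (Fin n) ℂ) - A)⁻¹)
        - ((-s) • (1 : Matrix (Fin n) (Fin n) ℂ) - Aᵀ)⁻¹ * X := by
  have key : Aᵀ * X + X * A
      = -(((-s) • (1 : Matrix (Fin n) (Fin n) ℂ) - Aᵀ) * X)
        - X * (s • (1 : Matrix (Fin n) (Fin n) ℂ) - A) := by
    simp only [sub_mul, mul_sub, smul_mul_assoc, mul_smul_comm, one_mul, mul_one, neg_smul,
      neg_mul]
    abel
  rw [key, mul_sub, sub_mul, mul_neg, Matrix.nonsing_inv_mul_cancel_left _ _ h2, neg_mul,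
    ← mul_assoc, Matrix.mul_nonsing_inv_cancel_right _ _ h1]

theorem stmt_2 (n m : ℕ) (hn : 0 < n) (hm : 0 < m)
    (A Q : Matrix (Fin n) (Fin n) ℝ) (B S : Matrix (Fin n) (Fin m) ℝ)
    (R : Matrix (Fin m) (Fin m) ℝ)
    (X : Matrix (Fin n) (Fin n) ℝ) (hX : Xᵀ = X) (s : ℂ)
    (h1 : IsUnit (s • (1 : Matrix (Fin n) (Fin n) ℂ) - cm A).det)
    (h2 : IsUnit ((-s) • (1 : Matrix (Fin n) (Fin n) ℂ) - (cm A)ᵀ).det) :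
    (cm B)ᵀ * ((-s) • (1 : Matrix (Fin n) (Fin n) ℂ) - (cm A)ᵀ)⁻¹ *
        cm (Q + Aᵀ * X + X * A) * (s • (1 : Matrix (Fin n) (Fin n) ℂ) - cm A)⁻¹ * cm B
      + (cm B)ᵀ * ((-s) • (1 : Matrix (Fin n) (Fin n) ℂ) - (cm A)ᵀ)⁻¹ * cm (S + X * B)
      + (cm (S + X * B))ᵀ * (s • (1 : Matrix (Fin n) (Fin n) ℂ) - cm A)⁻¹ * cm B
      + cm R
    = (cm B)ᵀ * ((-s) • (1 : Matrix (Fin n) (Fin n) ℂ) - (cm A)ᵀ)⁻¹ *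
        cm Q * (s • (1 : Matrix (Fin n) (Fin n) ℂ) - cm A)⁻¹ * cm B
      + (cm B)ᵀ * ((-s) • (1 : Matrix (Fin n) (Fin n) ℂ) - (cm A)ᵀ)⁻¹ * cm S
      + (cm S)ᵀ * (s • (1 : Matrix (Fin n) (Fin n) ℂ) - cm A)⁻¹ * cm B
      + cm R := by
  have cm_add : ∀ {k l : ℕ} (M N : Matrix (Fin k) (Fin l) ℝ), cm (M + N) = cm M + cm N :=
    fun M N => Matrix.map_add _ Complex.ofReal_add M N
  have cm_mul : ∀ {k l p : ℕ} (M : Matrix (Fin k) (Fin l) ℝ) (N : Matrix (Fin l) (Fin p) ℝ),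
      cm (M * N) = cm M * cm N :=
    fun M N => Matrix.map_mul (f := Complex.ofRealHom)
  have cm_transpose : cm Aᵀ = (cm A)ᵀ := rfl
  have hXc : (cm X)ᵀ = cm X := congrArg cm hX
  have key := resolvent_mul_lyapunov_mul_resolvent (cm A) (cm X) s h1 h2
  rw [add_assoc Q, cm_add Q, cm_add, cm_add, cm_mul, cm_mul, cm_mul, cm_transpose,
    Matrix.transpose_add, Matrix.transpose_mul, hXc]
  generalize ((-s) • (1 : Matrix (Fin n) (Fin n) ℂ) - (cm A)ᵀ)⁻¹ = N at *
  generalize (s • (1 : Matrix (Fin n) (Fin n) ℂ) - cm A)⁻¹ = M at *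
  have key' := congrArg (fun Z => (cm B)ᵀ * Z * cm B) key
  simp only [Matrix.mul_add, Matrix.add_mul, Matrix.mul_sub, Matrix.sub_mul, Matrix.mul_neg,
    Matrix.neg_mul, ← Matrix.mul_assoc] at key' ⊢
  rw [← sub_eq_zero] at key' ⊢
  rw [← key']
  abel
end

section
/- (Spectral factorization.) Let X be a symmetric solution of CGCARE(Σ), and for s ∈ ℂ with s I_n − A invertible set W(s) = R^{1/2} R† S_Xᵀ (s I_n − A)⁻¹ B + R^{1/2}. Then for every s ∈ ℂ such that both s I_n − A and −s I_n − Aᵀ are invertible, the Popov function satisfies Φ(s) = Bᵀ(−s I_n − Aᵀ)⁻¹ Q (s I_n − A)⁻¹ B + Bᵀ(−s I_n − Aᵀ)⁻¹ S + Sᵀ (s I_n − A)⁻¹ B + R = W(−s)ᵀ W(s). -/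
/-!
Write `T = S + X B`, `F = s I - A`, `G = -s I - Aᵀ`. The kernel condition says that `T` vanishes on
`ker R`; since `R (I - Rdᵀ R) = 0`, this gives `T Rdᵀ R = T`, and transposing, `R Rd Tᵀ = Tᵀ`
(`mul_eq_self_of_ker`). Expanding `W(-s)ᵀ W(s)` with `Rhalf * Rhalf = R` therefore yields
`Bᵀ G⁻¹ T Rd Tᵀ F⁻¹ B + Bᵀ G⁻¹ T + Tᵀ F⁻¹ B + R`. The Riccati equation reads
`Q = T Rd Tᵀ + X F + G X`, because the terms `± s X` cancel, and substituting this together with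
`S = T - X B` into the Popov function makes all terms in `X` cancel
(`popov_factor`).
-/

open Matrix

lemma cm_mul {α β γ : Type*} [Fintype β] (M : Matrix α β ℝ) (N : Matrix β γ ℝ) :
    cm (M * N) = cm M * cm N :=
  Matrix.map_mul (f := Complex.ofRealHom)

lemma cm_add {α β : Type*} (M N : Matrix α β ℝ) : cm (M + N) = cm M + cm N := by
  ext; simp [cm]

lemma cm_sub {α β : Type*} (M N : Matrix α β ℝ) : cm (M - N) = cm M - cm N := by
  ext; simp [cm]

lemma cm_transpose {α β : Type*} (M : Matrix α β ℝ) : cm Mᵀ = (cm M)ᵀ := rfl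

/-- A matrix `T` vanishing on `ker R` satisfies `T P = T` for every `P` with `R P = R`. -/
lemma mul_eq_self_of_ker {n m : ℕ} {T : Matrix (Fin n) (Fin m) ℝ} {R P : Matrix (Fin m) (Fin m) ℝ}
    (hker : ∀ v : Fin m → ℝ, R.mulVec v = 0 → T.mulVec v = 0) (hP : R * P = R) : T * P = T := by
  apply Matrix.ext_of_mulVec_single
  intro j
  have h := hker (P *ᵥ Pi.single j 1 - Pi.single j 1) (by
    rw [mulVec_sub, mulVec_mulVec, hP, sub_self])
  rwa [mulVec_sub, mulVec_mulVec, sub_eq_zero] at h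

/-- The algebraic core of the factorization: `M` and `N` play the roles of `F⁻¹` and `G⁻¹`, and
`H` that of the square root of `R`. -/
lemma popov_factor {n m : ℕ} {Q X F G M N : Matrix (Fin n) (Fin n) ℂ}
    {B S T : Matrix (Fin n) (Fin m) ℂ} {R Rd H : Matrix (Fin m) (Fin m) ℂ}
    (hFM : F * M = 1) (hNG : N * G = 1) (hX : Xᵀ = X) (hT : T = S + X * B)
    (hQ : Q = T * Rd * Tᵀ + (X * F + G * X)) (hH : H * H = R)
    (hTR : T * (Rdᵀ * R) = T) (hRT : R * Rd * Tᵀ = Tᵀ) :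
    Bᵀ * N * Q * M * B + Bᵀ * N * S + Sᵀ * M * B + R
      = (Bᵀ * N * T * Rdᵀ * H + H) * (H * Rd * Tᵀ * M * B + H) := by
  have hS : S = T - X * B := by rw [hT]; abel
  have hSt : Sᵀ = Tᵀ - Bᵀ * X := by rw [hS, transpose_sub, transpose_mul, hX]
  have e1 : Bᵀ * N * (X * F + G * X) * M * B = Bᵀ * N * X * B + Bᵀ * X * M * B := by
    calc Bᵀ * N * (X * F + G * X) * M * B
        = Bᵀ * N * X * (F * M) * B + Bᵀ * (N * G) * X * M * B := by
          simp only [Matrix.mul_add, Matrix.add_mul, Matrix.mul_assoc]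
      _ = _ := by rw [hFM, hNG, Matrix.mul_one, Matrix.mul_one]
  have e2 : (Bᵀ * N * T * Rdᵀ * H + H) * (H * Rd * Tᵀ * M * B + H)
      = Bᵀ * N * T * Rd * Tᵀ * M * B + Bᵀ * N * T + Tᵀ * M * B + R := by
    calc (Bᵀ * N * T * Rdᵀ * H + H) * (H * Rd * Tᵀ * M * B + H)
        = Bᵀ * N * (T * (Rdᵀ * (H * H))) * Rd * Tᵀ * M * B + Bᵀ * N * (T * (Rdᵀ * (H * H)))
            + (H * H) * Rd * Tᵀ * M * B + H * H := by
          simp only [Matrix.mul_add, Matrix.add_mul, Matrix.mul_assoc]; abel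
      _ = _ := by rw [hH, hTR, hRT]
  rw [e2, hQ, hSt, Matrix.mul_add (Bᵀ * N), Matrix.add_mul, Matrix.add_mul, e1, hS]
  simp only [Matrix.mul_sub, Matrix.sub_mul, ← Matrix.mul_assoc]
  abel

theorem stmt_4 (n m : ℕ) (hn : 0 < n) (hm : 0 < m)
    (A Q : Matrix (Fin n) (Fin n) ℝ) (B S : Matrix (Fin n) (Fin m) ℝ)
    (R : Matrix (Fin m) (Fin m) ℝ)
    (hPi : (Matrix.fromBlocks Q S Sᵀ R).PosSemidef)
    (Rd : Matrix (Fin m) (Fin m) ℝ)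
    (hRd1 : R * Rd * R = R) (hRd2 : Rd * R * Rd = Rd)
    (hRd3 : (R * Rd)ᵀ = R * Rd) (hRd4 : (Rd * R)ᵀ = Rd * R)
    (Rhalf : Matrix (Fin m) (Fin m) ℝ)
    (hRhalf : Rhalf.PosSemidef) (hRhalf2 : Rhalf * Rhalf = R)
    (X : Matrix (Fin n) (Fin n) ℝ) (hX : Xᵀ = X)
    (hgcare : X * A + Aᵀ * X - (S + X * B) * Rd * (S + X * B)ᵀ + Q = 0)
    (hker : ∀ v : Fin m → ℝ, R.mulVec v = 0 → (S + X * B).mulVec v = 0)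
    (W : ℂ → Matrix (Fin m) (Fin m) ℂ)
    (hW : ∀ z : ℂ, IsUnit (z • (1 : Matrix (Fin n) (Fin n) ℂ) - cm A).det →
      W z = cm Rhalf * cm Rd * (cm (S + X * B))ᵀ *
          (z • (1 : Matrix (Fin n) (Fin n) ℂ) - cm A)⁻¹ * cm B + cm Rhalf)
    (s : ℂ)
    (h1 : IsUnit (s • (1 : Matrix (Fin n) (Fin n) ℂ) - cm A).det)
    (h2 : IsUnit ((-s) • (1 : Matrix (Fin n) (Fin n) ℂ) - (cm A)ᵀ).det) :
    (cm B)ᵀ * ((-s) • (1 : Matrix (Fin n) (Fin n) ℂ) - (cm A)ᵀ)⁻¹ *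
        cm Q * (s • (1 : Matrix (Fin n) (Fin n) ℂ) - cm A)⁻¹ * cm B
      + (cm B)ᵀ * ((-s) • (1 : Matrix (Fin n) (Fin n) ℂ) - (cm A)ᵀ)⁻¹ * cm S
      + (cm S)ᵀ * (s • (1 : Matrix (Fin n) (Fin n) ℂ) - cm A)⁻¹ * cm B
      + cm R
    = (W (-s))ᵀ * W s := by
  have hRt : Rᵀ = R := by
    have h : Rhalfᵀ = Rhalf := by simpa using hRhalf.isHermitian.eq
    rw [← hRhalf2, transpose_mul, h]
  have hRP : R * (Rdᵀ * R) = R := by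
    have h := congrArg transpose hRd1
    rwa [transpose_mul, transpose_mul, hRt] at h
  have hTR := mul_eq_self_of_ker hker hRP
  have hRT : R * Rd * (S + X * B)ᵀ = (S + X * B)ᵀ := by
    have h := congrArg transpose hTR
    rwa [transpose_mul, transpose_mul, transpose_transpose, hRt] at h
  have htr : ((-s) • (1 : Matrix (Fin n) (Fin n) ℂ) - cm A)ᵀ
      = (-s) • (1 : Matrix (Fin n) (Fin n) ℂ) - (cm A)ᵀ := by
    rw [transpose_sub, transpose_smul, transpose_one]
  have h2' : IsUnit ((-s) • (1 : Matrix (Fin n) (Fin n) ℂ) - cm A).det := by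
    rwa [← det_transpose, htr]
  have hQ : Q = (S + X * B) * Rd * (S + X * B)ᵀ - (X * A + Aᵀ * X) := by
    rw [← sub_eq_zero, ← hgcare]; abel
  have hHt : (cm Rhalf)ᵀ = cm Rhalf := by
    rw [← cm_transpose]; congr 1; simpa using hRhalf.isHermitian.eq
  have hWt : (W (-s))ᵀ = (cm B)ᵀ * ((-s) • (1 : Matrix (Fin n) (Fin n) ℂ) - (cm A)ᵀ)⁻¹
      * cm (S + X * B) * (cm Rd)ᵀ * cm Rhalf + cm Rhalf := by
    rw [hW _ h2']
    simp only [transpose_add, transpose_mul, transpose_transpose, transpose_nonsing_inv, htr, hHt,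
      Matrix.mul_assoc]
  rw [hWt, hW s h1]
  apply popov_factor (X := cm X) (mul_nonsing_inv _ h1) (nonsing_inv_mul _ h2)
  · rw [← cm_transpose, hX]
  · rw [cm_add, cm_mul]
  · conv_lhs => rw [hQ]
    rw [cm_sub, cm_mul, cm_mul, cm_add (X * A), cm_mul, cm_mul, cm_transpose, cm_transpose]
    simp only [Matrix.mul_sub, Matrix.sub_mul, Matrix.mul_smul, Matrix.smul_mul, Matrix.mul_one,
      Matrix.one_mul, neg_smul, Matrix.neg_mul]
    abel
  · rw [← cm_mul, hRhalf2]
  · rw [← cm_transpose, ← cm_mul, ← cm_mul, hTR]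
  · rw [← cm_transpose, ← cm_mul, ← cm_mul, hRT]
end

section
/- For any symmetric X ∈ ℝ^{n×n} and any s ∈ ℂ such that both s I_n − A and s I_n − A_X are invertible, one has (C (s I_n − A)⁻¹ B + D) · (I_m − R† S_Xᵀ (s I_n − A_X)⁻¹ B) = C_X (s I_n − A_X)⁻¹ B + D, where C_X = C − D R† S_Xᵀ; i.e. the transfer function G(s) = C(s I_n − A)⁻¹ B + D satisfies G(s) T_X(s)⁻¹ = C_X (s I_n − A_X)⁻¹ B + D. -/
/-!
With `K = R† S_Xᵀ`, the pencils `M = s I - A` and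
`N = s I - A_X` are related by `N = M + B K`, which gives the resolvent identity
`M⁻¹ B (I - K N⁻¹ B) = M⁻¹ (N - B K) N⁻¹ B = N⁻¹ B`. Multiplying by `C` on the left and adding
`D (I - K N⁻¹ B)` yields the claim (`transfer_feedback`). Applying this over `ℂ` only requires that
the entrywise embedding `cm` respects products, differences and transposes.
-/

open Matrix

/-- The effect of a state feedback `K` on a transfer function, with `M` and `M + B K` standing for
the open-loop and closed-loop pencils. -/
lemma transfer_feedback {n m p : Type*} [Fintype n] [DecidableEq n] [Fintype m] [DecidableEq m]
    (M N : Matrix n n ℂ) (B : Matrix n m ℂ) (C : Matrix p n ℂ) (D : Matrix p m ℂ)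
    (K : Matrix m n ℂ) (hN : N = M + B * K) (hM : IsUnit M.det) (hNu : IsUnit N.det) :
    (C * M⁻¹ * B + D) * (1 - K * N⁻¹ * B) = (C - D * K) * N⁻¹ * B + D := by
  have resolvent : M⁻¹ * (B * (1 - K * N⁻¹ * B)) = N⁻¹ * B := by
    have hMN : B * (1 - K * N⁻¹ * B) = M * (N⁻¹ * B) := by
      have hBK : M = N - B * K := by rw [hN, add_sub_cancel_right]
      rw [hBK, Matrix.sub_mul, Matrix.mul_nonsing_inv_cancel_left _ _ hNu, Matrix.mul_sub,
        Matrix.mul_one]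
      simp only [Matrix.mul_assoc]
    rw [hMN, Matrix.nonsing_inv_mul_cancel_left _ _ hM]
  have hC : C * M⁻¹ * B * (1 - K * N⁻¹ * B) = C * (N⁻¹ * B) := by
    rw [Matrix.mul_assoc, Matrix.mul_assoc, resolvent]
  rw [Matrix.add_mul, hC, Matrix.mul_sub, Matrix.mul_one, Matrix.sub_mul, Matrix.sub_mul]
  simp only [Matrix.mul_assoc]
  abel

theorem stmt_8 (n m p : ℕ) (hn : 0 < n) (hm : 0 < m) (hp : 0 < p)
    (A Q : Matrix (Fin n) (Fin n) ℝ) (B S : Matrix (Fin n) (Fin m) ℝ)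
    (R : Matrix (Fin m) (Fin m) ℝ)
    (C : Matrix (Fin p) (Fin n) ℝ) (D : Matrix (Fin p) (Fin m) ℝ)
    (hQ : Q = Cᵀ * C) (hS : S = Cᵀ * D) (hR : R = Dᵀ * D)
    (Rd : Matrix (Fin m) (Fin m) ℝ)
    (hRd1 : R * Rd * R = R) (hRd2 : Rd * R * Rd = Rd)
    (hRd3 : (R * Rd)ᵀ = R * Rd) (hRd4 : (Rd * R)ᵀ = Rd * R)
    (X : Matrix (Fin n) (Fin n) ℝ) (hX : Xᵀ = X)
    (s : ℂ)
    (h1 : IsUnit (s • (1 : Matrix (Fin n) (Fin n) ℂ) - cm A).det)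
    (h2 : IsUnit (s • (1 : Matrix (Fin n) (Fin n) ℂ)
        - cm (A - B * (Rd * (S + X * B)ᵀ))).det) :
    (cm C * (s • (1 : Matrix (Fin n) (Fin n) ℂ) - cm A)⁻¹ * cm B + cm D) *
      ((1 : Matrix (Fin m) (Fin m) ℂ) - cm Rd * (cm (S + X * B))ᵀ *
        (s • (1 : Matrix (Fin n) (Fin n) ℂ) - cm (A - B * (Rd * (S + X * B)ᵀ)))⁻¹ * cm B)
    = cm (C - D * (Rd * (S + X * B)ᵀ)) *
        (s • (1 : Matrix (Fin n) (Fin n) ℂ) - cm (A - B * (Rd * (S + X * B)ᵀ)))⁻¹ * cm B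
      + cm D := by
  have hK : cm (Rd * (S + X * B)ᵀ) = cm Rd * (cm (S + X * B))ᵀ := by
    rw [cm_mul, cm_transpose]
  rw [cm_sub C, cm_mul D, hK]
  refine transfer_feedback _ _ _ _ _ _ ?_ h1 h2
  rw [cm_sub A, cm_mul B, hK]
  abel
end

section
/- (The subspace 𝓡_{0,X} is output-nulling for C_X.) Let X be a symmetric solution of CGCARE(Σ). Then for every natural number k one has C_X · A_X^k · (B G) = 0; equivalently, the reachable subspace 𝓡_{0,X} = im [ B G | A_X B G | … | A_X^{n−1} B G ] is contained in ker C_X. -/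
open Matrix

/-!
Write `F = A_X`, `H = C_X`, `L = B G`. The Riccati equation, together with the kernel condition
`S_X G = 0`, is the closed-loop Lyapunov equation `X F + Fᵀ X + Hᵀ H = 0`. Moreover `R G = 0` forces
`D G = 0`, so that `0 = S_X G = Cᵀ D G + X B G` gives `X L = 0`.

If `X W = 0`, then `Wᵀ (X F + Fᵀ X + Hᵀ H) W = (H W)ᵀ (H W)` vanishes, hence `H W = 0`, and then
the Lyapunov equation applied to `W` gives `X (F W) = 0`. So `ker X ⊆ ker H` and `ker X` is
`F`-invariant; as it contains the image of `L`, `H F^k L = 0` for all `k`.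
-/

/-- For a solution of a Lyapunov equation `X F + Fᵀ X + Hᵀ H = 0`, `ker X` is contained in `ker H`
and is invariant under `F`. -/
lemma lyapunov_ker {n m p : ℕ} {X F : Matrix (Fin n) (Fin n) ℝ} {H : Matrix (Fin p) (Fin n) ℝ}
    (hX : Xᵀ = X) (hL : X * F + Fᵀ * X + Hᵀ * H = 0)
    {W : Matrix (Fin n) (Fin m) ℝ} (hW : X * W = 0) : H * W = 0 ∧ X * (F * W) = 0 := by
  have hW' : Wᵀ * X = 0 := by
    have := congrArg transpose hW
    rwa [transpose_mul, hX, transpose_zero] at this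
  have hLW : X * (F * W) + Hᵀ * (H * W) = 0 := by
    have := congrArg (· * W) hL
    simpa [Matrix.add_mul, Matrix.mul_assoc, hW] using this
  have hHW : H * W = 0 := by
    rw [← conjTranspose_mul_self_eq_zero, conjTranspose_eq_transpose_of_trivial, transpose_mul]
    have := congrArg (Wᵀ * ·) hLW
    simpa [Matrix.mul_add, ← Matrix.mul_assoc, hW'] using this
  refine ⟨hHW, ?_⟩
  simpa [hHW] using hLW

/-- The Moore–Penrose inverse of a symmetric matrix commutes with it. -/
lemma pinv_comm {m : ℕ} {R Rd : Matrix (Fin m) (Fin m) ℝ} (hRs : Rᵀ = R)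
    (h1 : R * Rd * R = R) (h3 : (R * Rd)ᵀ = R * Rd) (h4 : (Rd * R)ᵀ = Rd * R) :
    Rd * R = R * Rd := by
  have e1 : R * (R * Rd) = R := by
    have := congrArg transpose h1
    rwa [transpose_mul, h3, hRs] at this
  have e2 : Rd * R * R = R := by
    have := congrArg transpose (show R * (Rd * R) = R by rw [← Matrix.mul_assoc, h1])
    rwa [transpose_mul, h4, hRs] at this
  calc Rd * R = Rd * (R * (R * Rd)) := by rw [e1]
    _ = Rd * R * R * Rd := by simp only [Matrix.mul_assoc]
    _ = R * Rd := by rw [e2]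

theorem stmt_9 (n m p : ℕ) (hn : 0 < n) (hm : 0 < m) (hp : 0 < p)
    (A Q : Matrix (Fin n) (Fin n) ℝ) (B S : Matrix (Fin n) (Fin m) ℝ)
    (R : Matrix (Fin m) (Fin m) ℝ)
    (hPi : (Matrix.fromBlocks Q S Sᵀ R).PosSemidef)
    (C : Matrix (Fin p) (Fin n) ℝ) (D : Matrix (Fin p) (Fin m) ℝ)
    (hQ : Q = Cᵀ * C) (hS : S = Cᵀ * D) (hR : R = Dᵀ * D)
    (Rd : Matrix (Fin m) (Fin m) ℝ)
    (hRd1 : R * Rd * R = R) (hRd2 : Rd * R * Rd = Rd)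
    (hRd3 : (R * Rd)ᵀ = R * Rd) (hRd4 : (Rd * R)ᵀ = Rd * R)
    (X : Matrix (Fin n) (Fin n) ℝ) (hX : Xᵀ = X)
    (hgcare : X * A + Aᵀ * X - (S + X * B) * Rd * (S + X * B)ᵀ + Q = 0)
    (hker : ∀ v : Fin m → ℝ, R.mulVec v = 0 → (S + X * B).mulVec v = 0) :
    ∀ k : ℕ,
      (C - D * (Rd * (S + X * B)ᵀ)) * (A - B * (Rd * (S + X * B)ᵀ)) ^ k *
        (B * ((1 : Matrix (Fin m) (Fin m) ℝ) - Rd * R)) = 0 := by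
  have hRs : Rᵀ = R := by rw [hR, transpose_mul, transpose_transpose]
  have hcomm := pinv_comm hRs hRd1 hRd3 hRd4
  have hRG : R * (1 - Rd * R) = 0 := by
    rw [Matrix.mul_sub, Matrix.mul_one, ← Matrix.mul_assoc, hRd1, sub_self]
  have hDG : D * (1 - Rd * R) = 0 := by
    rw [← conjTranspose_mul_self_eq_zero, conjTranspose_eq_transpose_of_trivial, transpose_mul,
      Matrix.mul_assoc, ← Matrix.mul_assoc Dᵀ, ← hR, hRG, Matrix.mul_zero]
  have hSG : (S + X * B) * (1 - Rd * R) = 0 := by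
    refine Matrix.ext_of_mulVec_single fun j => ?_
    rw [← Matrix.mulVec_mulVec, zero_mulVec]
    apply hker
    rw [Matrix.mulVec_mulVec, hRG, zero_mulVec]
  have hXL : X * (B * (1 - Rd * R)) = 0 := by
    rw [Matrix.add_mul, hS, Matrix.mul_assoc Cᵀ, hDG, Matrix.mul_zero, zero_add,
      Matrix.mul_assoc] at hSG
    exact hSG
  have hLyap : X * (A - B * (Rd * (S + X * B)ᵀ)) + (A - B * (Rd * (S + X * B)ᵀ))ᵀ * X +
      (C - D * (Rd * (S + X * B)ᵀ))ᵀ * (C - D * (Rd * (S + X * B)ᵀ)) = 0 := by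
    have hSXt : (S + X * B)ᵀ = Dᵀ * C + Bᵀ * X := by
      rw [hS, transpose_add, transpose_mul, transpose_mul, transpose_transpose, hX]
    set T := S + X * B with hT
    have hTR : T * (Rd * R) = T := by
      rw [Matrix.mul_sub, Matrix.mul_one, sub_eq_zero] at hSG
      exact hSG.symm
    have hTRd : T * Rd * Tᵀ = X * A + Aᵀ * X + Q := by
      rw [← sub_eq_zero, ← neg_eq_zero, ← hgcare]; abel
    -- `T Rd Tᵀ` is symmetric because the rest of the Riccati equation is.
    have hsymm : T * Rdᵀ * Tᵀ = T * Rd * Tᵀ := by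
      have := congrArg transpose hTRd
      simp only [transpose_mul, transpose_add, transpose_transpose, hX, hQ] at this
      rw [hTRd, Matrix.mul_assoc, this, hQ]; abel
    have hquad : T * Rdᵀ * R = T := by
      have : Rdᵀ * R = Rd * R := by
        rw [hcomm, ← hRd3, transpose_mul, hRs]
      rw [Matrix.mul_assoc, this, hTR]
    have expand : X * (A - B * (Rd * Tᵀ)) + (A - B * (Rd * Tᵀ))ᵀ * X +
        (C - D * (Rd * Tᵀ))ᵀ * (C - D * (Rd * Tᵀ)) =
        X * A + Aᵀ * X + Cᵀ * C - (Cᵀ * D + X * B) * Rd * Tᵀ - T * Rdᵀ * (Dᵀ * C + Bᵀ * X)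
          + T * Rdᵀ * (Dᵀ * D) * Rd * Tᵀ := by
      simp only [transpose_sub, transpose_mul, transpose_transpose, Matrix.mul_sub,
        Matrix.sub_mul, Matrix.add_mul, Matrix.mul_add, Matrix.mul_assoc]
      abel
    rw [expand, ← hSXt, ← hR, hquad, ← hS, ← hT, hsymm, hTRd, hQ]
    abel
  have hXk : ∀ k : ℕ, X * ((A - B * (Rd * (S + X * B)ᵀ)) ^ k * (B * (1 - Rd * R))) = 0 := by
    intro k
    induction k with
    | zero => rwa [pow_zero, Matrix.one_mul]
    | succ k ih =>
      rw [pow_succ', Matrix.mul_assoc]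
      exact (lyapunov_ker hX hLyap ih).2
  intro k
  rw [Matrix.mul_assoc]
  exact (lyapunov_ker hX hLyap (hXk k)).1
end

section
/- (ker X is an output-nulling subspace.) Let X be a symmetric solution of GCARE(Σ). Then for every ξ ∈ ℝ^n with X ξ = 0 one has C_X ξ = 0 and X (A_X ξ) = 0; i.e. ker X is A_X-invariant and contained in ker C_X, so ker X is an output-nulling subspace of the quadruple (A, B, C, D) with friend −K_X. -/
/-!
For `ξ ∈ ker X` put `u = K_X ξ`; since `X ξ = 0`, `u = R† Dᵀ C ξ`. As `R R† Dᵀ = Dᵀ`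
(`mul_pinv_mul_transpose`), the residual `e = C_X ξ = C ξ - D u` satisfies `Dᵀ e = 0`, so that
`e ⬝ e = (C ξ) ⬝ e = ξᵀ (Q - S_X R† S_Xᵀ) ξ`, which is the quadratic form of the Riccati equation at
`ξ` and hence vanishes. Thus `C_X ξ = 0`, i.e. `C ξ = D u`, and substituting this into the Riccati
equation applied to `ξ` leaves `X A ξ - X B u = 0`.
-/

open Matrix

/-- `R R†` acts as the identity on the range of `Dᵀ`, which equals the range of `R = Dᵀ D`. -/
lemma mul_pinv_mul_transpose {m p : ℕ} (D : Matrix (Fin p) (Fin m) ℝ)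
    (Rd : Matrix (Fin m) (Fin m) ℝ) (h : Dᵀ * D * Rd * (Dᵀ * D) = Dᵀ * D) :
    Dᵀ * D * Rd * Dᵀ = Dᵀ := by
  have hD : (Dᵀ * D * Rd * Dᵀ - Dᵀ) * D = 0 := by
    rw [Matrix.sub_mul, Matrix.mul_assoc _ Dᵀ D, h, sub_self]
  have hE : (Dᵀ * D * Rd * Dᵀ - Dᵀ)ᵀ = D * (Dᵀ * D * Rd - 1)ᵀ := by
    simp [Matrix.mul_sub]
  have hz : (Dᵀ * D * Rd * Dᵀ - Dᵀ) * (Dᵀ * D * Rd * Dᵀ - Dᵀ)ᴴ = 0 := by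
    rw [conjTranspose_eq_transpose_of_trivial, hE, ← Matrix.mul_assoc, hD, Matrix.zero_mul]
  exact sub_eq_zero.mp (self_mul_conjTranspose_eq_zero.mp hz)

theorem stmt_12 (n m p : ℕ) (hn : 0 < n) (hm : 0 < m) (hp : 0 < p)
    (A Q : Matrix (Fin n) (Fin n) ℝ) (B S : Matrix (Fin n) (Fin m) ℝ)
    (R : Matrix (Fin m) (Fin m) ℝ)
    (hPi : (Matrix.fromBlocks Q S Sᵀ R).PosSemidef)
    (C : Matrix (Fin p) (Fin n) ℝ) (D : Matrix (Fin p) (Fin m) ℝ)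
    (hQ : Q = Cᵀ * C) (hS : S = Cᵀ * D) (hR : R = Dᵀ * D)
    (Rd : Matrix (Fin m) (Fin m) ℝ)
    (hRd1 : R * Rd * R = R) (hRd2 : Rd * R * Rd = Rd)
    (hRd3 : (R * Rd)ᵀ = R * Rd) (hRd4 : (Rd * R)ᵀ = Rd * R)
    (X : Matrix (Fin n) (Fin n) ℝ) (hX : Xᵀ = X)
    (hgcare : X * A + Aᵀ * X - (S + X * B) * Rd * (S + X * B)ᵀ + Q = 0) :
    ∀ ξ : Fin n → ℝ, X.mulVec ξ = 0 →
      (C - D * (Rd * (S + X * B)ᵀ)).mulVec ξ = 0 ∧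
      X.mulVec ((A - B * (Rd * (S + X * B)ᵀ)).mulVec ξ) = 0 := by
  intro ξ hξ
  subst hQ hS hR
  have hP := mul_pinv_mul_transpose D Rd hRd1
  have hSx : (Cᵀ * D + X * B)ᵀ *ᵥ ξ = Dᵀ *ᵥ (C *ᵥ ξ) := by
    simp [Matrix.transpose_add, Matrix.transpose_mul, hX, Matrix.add_mulVec,
      ← Matrix.mulVec_mulVec, hξ]
  obtain ⟨u, hu⟩ : ∃ u, u = Rd *ᵥ (Dᵀ *ᵥ (C *ᵥ ξ)) := ⟨_, rfl⟩
  have hDu : Dᵀ *ᵥ (D *ᵥ u) = Dᵀ *ᵥ (C *ᵥ ξ) := by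
    have h := congrArg (· *ᵥ (C *ᵥ ξ)) hP
    simp only [← Matrix.mulVec_mulVec, ← hu] at h
    exact h
  have hg : X *ᵥ (A *ᵥ ξ) - (Cᵀ *ᵥ (D *ᵥ u) + X *ᵥ (B *ᵥ u)) + Cᵀ *ᵥ (C *ᵥ ξ) = 0 := by
    have h := congrArg (· *ᵥ ξ) hgcare
    simp only [Matrix.add_mulVec, Matrix.sub_mulVec, ← Matrix.mulVec_mulVec, hSx, hξ, ← hu,
      Matrix.mulVec_zero, add_zero, Matrix.zero_mulVec] at h
    exact h
  have hXdot : ∀ v, ξ ⬝ᵥ (X *ᵥ v) = 0 := fun v => by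
    rw [Matrix.dotProduct_mulVec, ← Matrix.mulVec_transpose, hX, hξ, zero_dotProduct]
  have hCdot : ∀ v, ξ ⬝ᵥ (Cᵀ *ᵥ v) = (C *ᵥ ξ) ⬝ᵥ v := fun v => by
    rw [Matrix.dotProduct_mulVec, Matrix.vecMul_transpose]
  have hq := congrArg (ξ ⬝ᵥ ·) hg
  simp only [dotProduct_add, dotProduct_sub, hXdot, hCdot, dotProduct_zero] at hq
  have horth : (D *ᵥ u) ⬝ᵥ (C *ᵥ ξ - D *ᵥ u) = 0 := by
    have h : Dᵀ *ᵥ (C *ᵥ ξ - D *ᵥ u) = 0 := by rw [Matrix.mulVec_sub, hDu, sub_self]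
    rw [← Matrix.vecMul_transpose, ← Matrix.dotProduct_mulVec, Matrix.vecMul_transpose, h,
      dotProduct_zero]
  have he : C *ᵥ ξ - D *ᵥ u = 0 := by
    rw [← dotProduct_self_eq_zero, sub_dotProduct, horth, dotProduct_sub]
    linarith
  constructor
  · simpa only [Matrix.sub_mulVec, ← Matrix.mulVec_mulVec, hSx, ← hu] using he
  · rw [sub_eq_zero] at he
    simp only [Matrix.sub_mulVec, ← Matrix.mulVec_mulVec, hSx, ← hu, Matrix.mulVec_sub]
    rw [← hg, he]
    abel
end

section
/- Let X be a symmetric solution of CGCARE(Σ). Then for every natural number k one has X · A_X^k · (B G) = 0; equivalently, X annihilates the reachable subspace 𝓡_{0,X} = im [ B G | A_X B G | … | A_X^{n−1} B G ]. -/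
open Matrix

/-!
Let `F = A - B K`, `K = Rd (S + X B)ᵀ` and `G = 1 - Rd R`. Since the Popov matrix is positive
semidefinite, `R G = 0` forces `S G = 0`; together with `(S + X B) G = 0` this gives `X B G = 0`,
which is the case `k = 0`. The Riccati equation can be rewritten in closed-loop form as the
Lyapunov equation `X F + Fᵀ X + W = 0`, where `W = [1; -K]ᵀ Π [1; -K]` is positive semidefinite.
If `X M = 0`, then `Mᵀ W M = 0`, so `W M = 0`, and the Lyapunov equation yields `X F M = 0`
(`mul_mul_eq_zero_of_lyapunov`): the kernel of `X` is `F`-invariant, and induction on `k` concludes.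
-/

lemma Matrix.PosSemidef.mul_eq_zero_of_transpose_mul_mul {p q : Type*} [Fintype p] [Fintype q]
    {P : Matrix p p ℝ} (hP : P.PosSemidef) {M : Matrix p q ℝ} (h : Mᵀ * P * M = 0) :
    P * M = 0 := by
  classical
  obtain ⟨C, rfl⟩ : ∃ C : Matrix p p ℝ, P = Cᴴ * C := by
    open scoped MatrixOrder in
    exact CStarAlgebra.nonneg_iff_eq_star_mul_self.1 hP.nonneg
  have h2 : (C * M)ᴴ * (C * M) = 0 := by
    rw [← h, conjTranspose_mul, conjTranspose_eq_transpose_of_trivial M]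
    simp only [Matrix.mul_assoc]
  rw [Matrix.mul_assoc, Matrix.conjTranspose_mul_self_eq_zero.1 h2, Matrix.mul_zero]

/-- The kernel of a symmetric solution `X` of a Lyapunov equation with positive semidefinite
constant term is invariant under the coefficient `F`. -/
lemma mul_mul_eq_zero_of_lyapunov {p q : Type*} [Fintype p] [Fintype q]
    {X F W : Matrix p p ℝ} (hX : Xᵀ = X) (hW : W.PosSemidef)
    (h : X * F + Fᵀ * X + W = 0) {M : Matrix p q ℝ} (hM : X * M = 0) : X * (F * M) = 0 := by
  have hM' : Mᵀ * X = 0 := by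
    simpa [hX] using congrArg transpose hM
  have hWM : W * M = 0 := by
    apply hW.mul_eq_zero_of_transpose_mul_mul
    have h1 : Mᵀ * (X * F + Fᵀ * X + W) * M = 0 := by rw [h]; simp
    have h2 : Mᵀ * (X * F + Fᵀ * X + W) * M
        = Mᵀ * X * (F * M) + Mᵀ * Fᵀ * (X * M) + Mᵀ * W * M := by
      simp only [Matrix.mul_add, Matrix.add_mul, Matrix.mul_assoc]
    rwa [h2, hM', hM, Matrix.zero_mul, Matrix.mul_zero, zero_add, zero_add] at h1
  have h1 : (X * F + Fᵀ * X + W) * M = 0 := by rw [h]; simp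
  rwa [Matrix.add_mul, Matrix.add_mul, hWM, Matrix.mul_assoc, Matrix.mul_assoc, hM,
    Matrix.mul_zero, add_zero, add_zero] at h1

theorem stmt_13 (n m : ℕ) (hn : 0 < n) (hm : 0 < m)
    (A Q : Matrix (Fin n) (Fin n) ℝ) (B S : Matrix (Fin n) (Fin m) ℝ)
    (R : Matrix (Fin m) (Fin m) ℝ)
    (hPi : (Matrix.fromBlocks Q S Sᵀ R).PosSemidef)
    (Rd : Matrix (Fin m) (Fin m) ℝ)
    (hRd1 : R * Rd * R = R) (hRd2 : Rd * R * Rd = Rd)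
    (hRd3 : (R * Rd)ᵀ = R * Rd) (hRd4 : (Rd * R)ᵀ = Rd * R)
    (X : Matrix (Fin n) (Fin n) ℝ) (hX : Xᵀ = X)
    (hgcare : X * A + Aᵀ * X - (S + X * B) * Rd * (S + X * B)ᵀ + Q = 0)
    (hker : ∀ v : Fin m → ℝ, R.mulVec v = 0 → (S + X * B).mulVec v = 0) :
    ∀ k : ℕ,
      X * (A - B * (Rd * (S + X * B)ᵀ)) ^ k *
        (B * ((1 : Matrix (Fin m) (Fin m) ℝ) - Rd * R)) = 0 := by
  have hRt : Rᵀ = R := by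
    have h := hPi.1
    rw [IsHermitian, fromBlocks_conjTranspose, fromBlocks_inj] at h
    simpa using h.2.2.2
  have hRG : R * (1 - Rd * R) = 0 := by
    rw [Matrix.mul_sub, Matrix.mul_one, ← Matrix.mul_assoc, hRd1, sub_self]
  have hSG : S * (1 - Rd * R) = 0 := by
    have hz : fromBlocks Q S Sᵀ R * fromRows (0 : Matrix (Fin n) (Fin m) ℝ) (1 - Rd * R) = 0 := by
      apply hPi.mul_eq_zero_of_transpose_mul_mul
      rw [Matrix.mul_assoc, fromBlocks_mul_fromRows, transpose_fromRows, fromCols_mul_fromRows]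
      simp [hRG]
    rw [fromBlocks_mul_fromRows, hRG, Matrix.mul_zero, zero_add] at hz
    ext i j
    simpa using congrFun (congrFun hz (Sum.inl i)) j
  have hSXG : (S + X * B) * (1 - Rd * R) = 0 := by
    ext i j
    have h := hker (fun a => (1 - Rd * R) a j)
      (by ext a; exact congrFun (congrFun hRG a) j)
    exact congrFun h i
  have hXBG : X * (B * (1 - Rd * R)) = 0 := by
    rwa [Matrix.add_mul, hSG, zero_add, Matrix.mul_assoc] at hSXG
  have hSX : (S + X * B) * (Rd * R) = S + X * B := by
    rw [Matrix.mul_sub, Matrix.mul_one, sub_eq_zero] at hSXG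
    exact hSXG.symm
  -- From here on the pseudoinverse enters only through `R K = (S + X B)ᵀ`.
  obtain ⟨K, hK⟩ : ∃ K, K = Rd * (S + X * B)ᵀ := ⟨_, rfl⟩
  have hRK : R * K = (S + X * B)ᵀ := by
    have h1 : (Rd * R)ᵀ = R * Rdᵀ := by rw [transpose_mul, hRt]
    have h2 : (R * Rd)ᵀ = Rdᵀ * R := by rw [transpose_mul, hRt]
    have h3 : R * Rd = Rd * R := by
      -- Symmetry of `R`, `R Rd` and `Rd R` makes both sides equal to `R Rd (Rd R)`.
      have e1 : Rdᵀ * R = R * Rd := by rw [← h2, hRd3]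
      have e2 : R * Rdᵀ = Rd * R := by rw [← h1, hRd4]
      have e3 : R * Rd * (Rd * R) = Rd * R := by
        rw [← e2, ← Matrix.mul_assoc, hRd1]
      have e4 : R * Rd * (Rd * R) = R * Rd := by
        rw [← e1, Matrix.mul_assoc, ← Matrix.mul_assoc R, hRd1]
      rw [← e4, e3]
    have h4 := congrArg transpose hSX
    rw [transpose_mul, hRd4] at h4
    rw [hK, ← Matrix.mul_assoc, h3, h4]
  have hKR : Kᵀ * R = S + X * B := by
    have h := congrArg transpose hRK
    rwa [transpose_mul, hRt, transpose_transpose] at h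
  rw [Matrix.mul_assoc (S + X * B), ← hK] at hgcare
  rw [← hK]
  obtain ⟨L, hL⟩ : ∃ L, L = fromRows (1 : Matrix (Fin n) (Fin n) ℝ) (-K) := ⟨_, rfl⟩
  have hW : (Lᴴ * fromBlocks Q S Sᵀ R * L).PosSemidef :=
    hPi.conjTranspose_mul_mul_same _
  have hWeq : Lᴴ * fromBlocks Q S Sᵀ R * L
      = Q - S * K - Kᵀ * Sᵀ + Kᵀ * R * K := by
    rw [hL, conjTranspose_eq_transpose_of_trivial, Matrix.mul_assoc, fromBlocks_mul_fromRows,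
      transpose_fromRows, fromCols_mul_fromRows]
    simp only [transpose_one, transpose_neg, Matrix.mul_one, Matrix.one_mul, Matrix.mul_neg,
      Matrix.neg_mul, Matrix.mul_add, Matrix.mul_assoc]
    abel
  rw [hWeq] at hW
  have hlyap : X * (A - B * K) + (A - B * K)ᵀ * X
      + (Q - S * K - Kᵀ * Sᵀ + Kᵀ * R * K) = 0 := by
    have e1 : Kᵀ * R * K = S * K + X * (B * K) := by
      rw [hKR, Matrix.add_mul, Matrix.mul_assoc]
    have e2 : Kᵀ * R * K = Kᵀ * Sᵀ + Kᵀ * (Bᵀ * X) := by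
      rw [Matrix.mul_assoc, hRK, transpose_add, transpose_mul, hX, Matrix.mul_add]
    have e3 : (S + X * B) * K = Kᵀ * R * K := by rw [hKR]
    rw [e3] at hgcare
    rw [transpose_sub, transpose_mul, Matrix.mul_sub, Matrix.sub_mul, Matrix.mul_assoc Kᵀ Bᵀ X]
    generalize Kᵀ * R * K = T at *
    rw [← hgcare, ← sub_eq_zero]
    have f1 := sub_eq_zero.2 e1
    have f2 := sub_eq_zero.2 e2
    rw [← add_zero (0 : Matrix (Fin n) (Fin n) ℝ)]
    nth_rewrite 1 [← f1]
    rw [← f2]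
    abel
  intro k
  rw [Matrix.mul_assoc]
  induction k with
  | zero => rwa [pow_zero, Matrix.one_mul]
  | succ k ih =>
    rw [pow_succ', Matrix.mul_assoc]
    exact mul_mul_eq_zero_of_lyapunov hX hW hlyap ih
end

section
/- (𝓡_{0,X} is independent of X.) Let X be a symmetric solution of CGCARE(Σ) and set F = A − B R† Sᵀ. Then for every natural number k one has A_X^k · (B G) = F^k · (B G). Consequently the reachable subspace 𝓡_{0,X} of the pair (A_X, B G), namely the column span of [ B G | A_X B G | … | A_X^{n−1} B G ], equals the column span of [ B G | F B G | … | F^{n−1} B G ], which does not depend on the solution X. -/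
/-!
Write `F = A - B R† Sᵀ`, so that `A_X = F - B R† Bᵀ X`. It suffices that `X F ^ k B G = 0` for every
`k`, since then the correction term never contributes.

For `k = 0`, positivity of the Popov matrix gives `ker R ⊆ ker S`, so the constraint
`ker R ⊆ ker (S + X B)` yields `X B G = 0`. For the induction step, `ker X` is `F`-invariant: if
`X v = 0`, the Riccati equation applied to `v` reads `X F v + (Q - S R† Sᵀ) v = 0`. Pairing with `v`
gives `vᵀ (Q - S R† Sᵀ) v = 0`, which is the quadratic form of the Popov matrix at
`(v, -R† Sᵀ v)`. Positivity then forces `(Q - S R† Sᵀ) v = 0`, hence `X F v = 0`.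
-/

open Matrix

/-- The inclusion `ker R ⊆ ker S` for a positive semidefinite Popov matrix. -/
lemma popov_ker {n m : ℕ} {Q : Matrix (Fin n) (Fin n) ℝ} {S : Matrix (Fin n) (Fin m) ℝ}
    {R : Matrix (Fin m) (Fin m) ℝ} (hPi : (Matrix.fromBlocks Q S Sᵀ R).PosSemidef)
    (u : Fin m → ℝ) (hu : R *ᵥ u = 0) : S *ᵥ u = 0 := by
  have h := (hPi.dotProduct_mulVec_zero_iff (Sum.elim 0 u)).1 (by
    simp [Matrix.fromBlocks_mulVec, hu, dotProduct])
  rw [Matrix.fromBlocks_mulVec] at h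
  funext i
  simpa using congrFun h (Sum.inl i)

/-- The kernel of the generalized Schur complement `Q - S R† Sᵀ` contains its isotropic vectors. -/
lemma schur_ker {n m : ℕ} {Q : Matrix (Fin n) (Fin n) ℝ} {S : Matrix (Fin n) (Fin m) ℝ}
    {R Rd : Matrix (Fin m) (Fin m) ℝ} (hPi : (Matrix.fromBlocks Q S Sᵀ R).PosSemidef)
    (hRd1 : R * Rd * R = R) (v : Fin n → ℝ)
    (hv : v ⬝ᵥ ((Q - S * Rd * Sᵀ) *ᵥ v) = 0) : (Q - S * Rd * Sᵀ) *ᵥ v = 0 := by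
  have hR : Rᵀ = R := by
    have h := hPi.1
    rw [Matrix.IsHermitian, Matrix.fromBlocks_conjTranspose, Matrix.fromBlocks_inj] at h
    simpa using h.2.2.2
  have hS : S * (1 - Rdᵀ * R) = 0 := by
    apply Matrix.ext_of_mulVec_single
    intro i
    rw [← Matrix.mulVec_mulVec, Matrix.zero_mulVec]
    apply popov_ker hPi
    have h : R * (1 - Rdᵀ * R) = 0 := by
      have h1 := congrArg Matrix.transpose hRd1
      simp only [Matrix.transpose_mul, hR] at h1
      rw [Matrix.mul_sub, Matrix.mul_one, h1, sub_self]
    rw [Matrix.mulVec_mulVec, h, Matrix.zero_mulVec]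
  have hS' : Sᵀ - R * Rd * Sᵀ = 0 := by
    have h1 := congrArg Matrix.transpose hS
    simpa [Matrix.transpose_mul, hR, Matrix.sub_mul] using h1
  have hw : Matrix.fromBlocks Q S Sᵀ R *ᵥ Sum.elim v (-((Rd * Sᵀ) *ᵥ v)) =
      Sum.elim ((Q - S * Rd * Sᵀ) *ᵥ v) 0 := by
    rw [Matrix.fromBlocks_mulVec]
    have h2 : Sᵀ *ᵥ v - (R * Rd * Sᵀ) *ᵥ v = 0 := by
      rw [← Matrix.sub_mulVec, hS', Matrix.zero_mulVec]
    congr 1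
    · rw [Matrix.sub_mulVec]
      simp [Matrix.mulVec_neg, Matrix.mul_assoc, sub_eq_add_neg]
    · simpa [Matrix.mulVec_neg, Matrix.mul_assoc, sub_eq_add_neg] using h2
  have h := (hPi.dotProduct_mulVec_zero_iff (Sum.elim v (-((Rd * Sᵀ) *ᵥ v)))).1 (by
    rw [hw]
    simpa [dotProduct] using hv)
  rw [hw] at h
  funext i
  simpa using congrFun h (Sum.inl i)

/-- The kernel of a symmetric solution `X` of the Riccati equation is invariant under
`F = A - B R† Sᵀ`. -/
lemma ker_invariant {n m : ℕ} {A Q X : Matrix (Fin n) (Fin n) ℝ} {B S : Matrix (Fin n) (Fin m) ℝ}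
    {R Rd : Matrix (Fin m) (Fin m) ℝ} (hPi : (Matrix.fromBlocks Q S Sᵀ R).PosSemidef)
    (hRd1 : R * Rd * R = R) (hX : Xᵀ = X)
    (hgcare : X * A + Aᵀ * X - (S + X * B) * Rd * (S + X * B)ᵀ + Q = 0)
    (v : Fin n → ℝ) (hv : X *ᵥ v = 0) : X *ᵥ ((A - B * (Rd * Sᵀ)) *ᵥ v) = 0 := by
  have hric : X * (A - B * (Rd * Sᵀ)) + (Q - S * Rd * Sᵀ) +
      (Aᵀ - (S + X * B) * Rd * Bᵀ) * X = 0 := by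
    rw [← hgcare, Matrix.transpose_add, Matrix.transpose_mul, hX]
    simp only [Matrix.mul_add, Matrix.add_mul, Matrix.mul_sub, Matrix.sub_mul, Matrix.mul_assoc]
    abel
  have h1 : X *ᵥ ((A - B * (Rd * Sᵀ)) *ᵥ v) + (Q - S * Rd * Sᵀ) *ᵥ v = 0 := by
    have h := congrArg (fun M => M *ᵥ v) hric
    simpa only [Matrix.add_mulVec, ← Matrix.mulVec_mulVec, hv, Matrix.mulVec_zero, add_zero,
      Matrix.zero_mulVec] using h
  have h2 : v ⬝ᵥ (X *ᵥ ((A - B * (Rd * Sᵀ)) *ᵥ v)) = 0 := by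
    rw [Matrix.dotProduct_mulVec, ← Matrix.mulVec_transpose, hX, hv, zero_dotProduct]
  have h3 : v ⬝ᵥ ((Q - S * Rd * Sᵀ) *ᵥ v) = 0 := by
    have h := congrArg (fun u => v ⬝ᵥ u) h1
    simpa only [dotProduct_add, h2, zero_add, dotProduct_zero] using h
  rwa [schur_ker hPi hRd1 v h3, add_zero] at h1

theorem stmt_14 (n m : ℕ) (hn : 0 < n) (hm : 0 < m)
    (A Q : Matrix (Fin n) (Fin n) ℝ) (B S : Matrix (Fin n) (Fin m) ℝ)
    (R : Matrix (Fin m) (Fin m) ℝ)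
    (hPi : (Matrix.fromBlocks Q S Sᵀ R).PosSemidef)
    (Rd : Matrix (Fin m) (Fin m) ℝ)
    (hRd1 : R * Rd * R = R) (hRd2 : Rd * R * Rd = Rd)
    (hRd3 : (R * Rd)ᵀ = R * Rd) (hRd4 : (Rd * R)ᵀ = Rd * R)
    (X : Matrix (Fin n) (Fin n) ℝ) (hX : Xᵀ = X)
    (hgcare : X * A + Aᵀ * X - (S + X * B) * Rd * (S + X * B)ᵀ + Q = 0)
    (hker : ∀ v : Fin m → ℝ, R.mulVec v = 0 → (S + X * B).mulVec v = 0) :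
    (∀ k : ℕ,
      (A - B * (Rd * (S + X * B)ᵀ)) ^ k * (B * ((1 : Matrix (Fin m) (Fin m) ℝ) - Rd * R)) =
      (A - B * (Rd * Sᵀ)) ^ k * (B * ((1 : Matrix (Fin m) (Fin m) ℝ) - Rd * R))) ∧
    Submodule.span ℝ (⋃ k < n, Set.range fun j : Fin m =>
        fun i : Fin n => ((A - B * (Rd * (S + X * B)ᵀ)) ^ k *
          (B * ((1 : Matrix (Fin m) (Fin m) ℝ) - Rd * R))) i j) =
      Submodule.span ℝ (⋃ k < n, Set.range fun j : Fin m =>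
        fun i : Fin n => ((A - B * (Rd * Sᵀ)) ^ k *
          (B * ((1 : Matrix (Fin m) (Fin m) ℝ) - Rd * R))) i j) := by
  have hzero : X * (B * (1 - Rd * R)) = 0 := by
    apply Matrix.ext_of_mulVec_single
    intro i
    have hRu : R *ᵥ ((1 - Rd * R) *ᵥ Pi.single i 1) = 0 := by
      rw [Matrix.mulVec_mulVec, Matrix.mul_sub, Matrix.mul_one, ← Matrix.mul_assoc, hRd1, sub_self,
        Matrix.zero_mulVec]
    have h := hker _ hRu
    rw [Matrix.add_mulVec, popov_ker hPi _ hRu, zero_add] at h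
    rw [← Matrix.mul_assoc, ← Matrix.mulVec_mulVec, h, Matrix.zero_mulVec]
  have hall : ∀ k : ℕ, X * ((A - B * (Rd * Sᵀ)) ^ k * (B * (1 - Rd * R))) = 0 := by
    intro k
    induction k with
    | zero => simpa using hzero
    | succ k ih =>
      apply Matrix.ext_of_mulVec_single
      intro i
      have hv := congrArg (fun M => M *ᵥ Pi.single i 1) ih
      simp only [Matrix.zero_mulVec] at hv
      rw [← Matrix.mulVec_mulVec] at hv
      have h := ker_invariant hPi hRd1 hX hgcare _ hv
      rw [Matrix.zero_mulVec, pow_succ', Matrix.mul_assoc]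
      simpa only [Matrix.mulVec_mulVec] using h
  have hpow : ∀ k : ℕ,
      (A - B * (Rd * (S + X * B)ᵀ)) ^ k * (B * ((1 : Matrix (Fin m) (Fin m) ℝ) - Rd * R)) =
      (A - B * (Rd * Sᵀ)) ^ k * (B * ((1 : Matrix (Fin m) (Fin m) ℝ) - Rd * R)) := by
    intro k
    induction k with
    | zero => simp
    | succ k ih =>
      have hAX : A - B * (Rd * (S + X * B)ᵀ) = (A - B * (Rd * Sᵀ)) - B * (Rd * Bᵀ) * X := by
        rw [Matrix.transpose_add, Matrix.transpose_mul, hX]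
        simp only [Matrix.mul_add, Matrix.add_mul, Matrix.mul_sub, Matrix.sub_mul, Matrix.mul_assoc]
        abel
      rw [pow_succ', Matrix.mul_assoc, ih, pow_succ', Matrix.mul_assoc, hAX, Matrix.sub_mul,
        Matrix.mul_assoc (B * (Rd * Bᵀ)), hall k, Matrix.mul_zero, sub_zero]
  exact ⟨hpow, by simp only [hpow]⟩
end

section
/- (𝓡_{0,X} equals the reachability subspace on ker X.) Let X be a symmetric solution of CGCARE(Σ). Then B·(ker D) ⊆ ker X, and the smallest A_X-invariant subspace of ℝ^n containing B·(ker D) equals the smallest A_X-invariant subspace of ℝ^n containing (ker X) ∩ B·(ker D); moreover both equal the column span of [ B G | A_X B G | … | A_X^{n−1} B G ]. (Here B·(ker D) = { B u : u ∈ ℝ^m, D u = 0 }.) -/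
open Matrix

/-!
A vector `u ∈ ker D` satisfies `R u = Dᵀ D u = 0`, hence `(S + X B) u = 0`; since `S u = Cᵀ D u = 0`,
this gives `X B u = 0`. So `B (ker D) ⊆ ker X`, and intersecting with `ker X` changes nothing: the two
families of invariant subspaces coincide.

For the column span, `ker D = ker R` is the range of the projection `G = 1 - R† R`, so `B (ker D)` is
the column space of `B G`. By Cayley–Hamilton (`krylov_mem`) the columns of `M ^ k B G` with `k < n`
already span those for every `k`, so their span is invariant under `M = A_X`; it is clearly contained
in any invariant subspace containing the columns of `B G`.
-/

/-- The span of the columns of `M ^ k * N` with `k < n`. -/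
def krylov {n m : ℕ} (M : Matrix (Fin n) (Fin n) ℝ) (N : Matrix (Fin n) (Fin m) ℝ) :
    Submodule ℝ (Fin n → ℝ) :=
  Submodule.span ℝ (⋃ k < n, Set.range fun j : Fin m => fun i : Fin n => (M ^ k * N) i j)

/-- By Cayley–Hamilton, every power of `M` is a combination of the powers below `n`. -/
lemma krylov_mem {n m : ℕ} (M : Matrix (Fin n) (Fin n) ℝ) (N : Matrix (Fin n) (Fin m) ℝ)
    (k : ℕ) (j : Fin m) : (fun i => (M ^ k * N) i j) ∈ krylov M N := by
  have hdeg : (Polynomial.X ^ k %ₘ M.charpoly).degree < (n : ℕ) := by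
    have h := Polynomial.degree_modByMonic_lt (Polynomial.X ^ k) M.charpoly_monic
    rwa [Matrix.charpoly_degree_eq_dim, Fintype.card_fin] at h
  have hsum : (fun i => (M ^ k * N) i j) = ∑ l ∈ Finset.range n,
      (Polynomial.X ^ k %ₘ M.charpoly).coeff l • (fun i => (M ^ l * N) i j) := by
    ext i
    have hnat : (Polynomial.X ^ k %ₘ M.charpoly).natDegree < n := by
      by_cases h0 : Polynomial.X ^ k %ₘ M.charpoly = 0
      · rw [h0, Polynomial.natDegree_zero]
        exact i.pos
      · exact (Polynomial.natDegree_lt_iff_degree_lt h0).2 hdeg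
    rw [Matrix.pow_eq_aeval_mod_charpoly M k, Polynomial.aeval_eq_sum_range'
      (n := n) hnat]
    simp [Matrix.sum_mul, Matrix.sum_apply]
  rw [hsum]
  refine Submodule.sum_mem _ fun l hl => Submodule.smul_mem _ _ (Submodule.subset_span ?_)
  simp only [Set.mem_iUnion]
  exact ⟨l, Finset.mem_range.1 hl, j, rfl⟩

lemma mulVec_mem_krylov {n m : ℕ} (M : Matrix (Fin n) (Fin n) ℝ) (N : Matrix (Fin n) (Fin m) ℝ)
    (v : Fin n → ℝ) (hv : v ∈ krylov M N) : M *ᵥ v ∈ krylov M N := by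
  have hle : krylov M N ≤ (krylov M N).comap M.mulVecLin := by
    refine Submodule.span_le.2 ?_
    intro w hw
    simp only [Set.mem_iUnion] at hw
    obtain ⟨k, -, j, rfl⟩ := hw
    have h := krylov_mem M N (k + 1) j
    rw [pow_succ', Matrix.mul_assoc] at h
    exact h
  exact hle hv

theorem stmt_16 (n m p : ℕ) (hn : 0 < n) (hm : 0 < m) (hp : 0 < p)
    (A Q : Matrix (Fin n) (Fin n) ℝ) (B S : Matrix (Fin n) (Fin m) ℝ)
    (R : Matrix (Fin m) (Fin m) ℝ)
    (hPi : (Matrix.fromBlocks Q S Sᵀ R).PosSemidef)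
    (C : Matrix (Fin p) (Fin n) ℝ) (D : Matrix (Fin p) (Fin m) ℝ)
    (hQ : Q = Cᵀ * C) (hS : S = Cᵀ * D) (hR : R = Dᵀ * D)
    (Rd : Matrix (Fin m) (Fin m) ℝ)
    (hRd1 : R * Rd * R = R) (hRd2 : Rd * R * Rd = Rd)
    (hRd3 : (R * Rd)ᵀ = R * Rd) (hRd4 : (Rd * R)ᵀ = Rd * R)
    (X : Matrix (Fin n) (Fin n) ℝ) (hX : Xᵀ = X)
    (hgcare : X * A + Aᵀ * X - (S + X * B) * Rd * (S + X * B)ᵀ + Q = 0)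
    (hker : ∀ v : Fin m → ℝ, R.mulVec v = 0 → (S + X * B).mulVec v = 0) :
    (∀ u : Fin m → ℝ, D.mulVec u = 0 → X.mulVec (B.mulVec u) = 0) ∧
    sInf {W : Submodule ℝ (Fin n → ℝ) |
        (∀ u : Fin m → ℝ, D.mulVec u = 0 → B.mulVec u ∈ W) ∧
        (∀ v ∈ W, (A - B * (Rd * (S + X * B)ᵀ)).mulVec v ∈ W)} =
      sInf {W : Submodule ℝ (Fin n → ℝ) |
        (∀ x : Fin n → ℝ, X.mulVec x = 0 →
          (∃ u : Fin m → ℝ, D.mulVec u = 0 ∧ x = B.mulVec u) → x ∈ W) ∧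
        (∀ v ∈ W, (A - B * (Rd * (S + X * B)ᵀ)).mulVec v ∈ W)} ∧
    sInf {W : Submodule ℝ (Fin n → ℝ) |
        (∀ u : Fin m → ℝ, D.mulVec u = 0 → B.mulVec u ∈ W) ∧
        (∀ v ∈ W, (A - B * (Rd * (S + X * B)ᵀ)).mulVec v ∈ W)} =
      Submodule.span ℝ (⋃ k < n, Set.range fun j : Fin m =>
        fun i : Fin n => ((A - B * (Rd * (S + X * B)ᵀ)) ^ k *
          (B * ((1 : Matrix (Fin m) (Fin m) ℝ) - Rd * R))) i j) := by
  have hDR : ∀ u, D *ᵥ u = 0 → R *ᵥ u = 0 := by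
    intro u hu
    rw [hR, ← Matrix.mulVec_mulVec, hu, Matrix.mulVec_zero]
  have hRD : ∀ u, R *ᵥ u = 0 → D *ᵥ u = 0 := by
    intro u hu
    rw [hR, ← Matrix.conjTranspose_eq_transpose_of_trivial] at hu
    exact (Matrix.conjTranspose_mul_self_mulVec_eq_zero D u).1 hu
  have hXB : ∀ u, D *ᵥ u = 0 → X *ᵥ (B *ᵥ u) = 0 := by
    intro u hu
    have h := hker u (hDR u hu)
    rw [Matrix.add_mulVec, hS, ← Matrix.mulVec_mulVec, hu, Matrix.mulVec_zero, zero_add] at h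
    rwa [Matrix.mulVec_mulVec]
  refine ⟨hXB, ?_, ?_⟩
  · congr 1
    ext W
    refine and_congr_left fun _ => ⟨?_, fun h u hu => h _ (hXB u hu) ⟨u, hu, rfl⟩⟩
    rintro h x - ⟨u, hu, rfl⟩
    exact h u hu
  generalize A - B * (Rd * (S + X * B)ᵀ) = M
  change _ = krylov M (B * (1 - Rd * R))
  apply le_antisymm
  · refine sInf_le ⟨fun u hu => ?_, mulVec_mem_krylov _ _⟩
    -- `G` fixes `ker R`, so `B u = (B G) u` is a combination of the columns of `B G`.
    have hBu : B *ᵥ u = ∑ j, u j • (fun i : Fin n =>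
        (M ^ 0 * (B * (1 - Rd * R)) : Matrix (Fin n) (Fin m) ℝ) i j) := by
      have hG : B *ᵥ u = (B * (1 - Rd * R)) *ᵥ u := by
        rw [← Matrix.mulVec_mulVec, Matrix.sub_mulVec, ← Matrix.mulVec_mulVec, hDR u hu]
        simp
      rw [hG, pow_zero, Matrix.one_mul]
      ext i
      simp [Matrix.mulVec, dotProduct, mul_comm]
    rw [hBu]
    exact Submodule.sum_mem _ fun j _ => Submodule.smul_mem _ _ (krylov_mem _ _ 0 j)
  · refine le_sInf ?_
    rintro W ⟨hB, hM⟩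
    refine Submodule.span_le.2 ?_
    intro w hw
    simp only [Set.mem_iUnion] at hw
    obtain ⟨k, -, j, rfl⟩ := hw
    change _ ∈ W
    induction k with
    | zero =>
      have hD : D *ᵥ ((1 - Rd * R : Matrix (Fin m) (Fin m) ℝ).col j) = 0 := by
        apply hRD
        have h0 : R * (1 - Rd * R) = 0 := by
          rw [Matrix.mul_sub, Matrix.mul_one, ← Matrix.mul_assoc, hRd1, sub_self]
        ext i
        exact congrFun (congrFun h0 i) j
      have h := hB _ hD
      rw [pow_zero, Matrix.one_mul]
      exact h
    | succ k ih =>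
      have h := hM _ ih
      rw [pow_succ', Matrix.mul_assoc]
      exact h
end
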